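/- For every natural number p, one has f(p,p) = 1. -/

import Mathlib

/-!
A move on the diagonal `(p, p)` splits it either into two diagonal positions, or into two
off-diagonal ones. If off-diagonal nimbers are all even, then an option of `f p p` is
`1 ^^^ 1 = 0` or the Nim-sum of two even numbers, so it is never `1`, whereas `0 = h p ^^^ h p`
is an option. Hence `f p p = 1`.

Evenness off the diagonal comes from an exact formula: for `p ≠ q`, `f p q = 2 * halfNim p q`,
where `halfNim p q = min p q ((2(p + q) - 2) / 5)`, except that `halfNim 1 2 = halfNim 2 1 = 1`.
It is proved by strong induction together with the diagonal value (`f_eq_nimFormula`). By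
symmetry let `p < q`.

* `2 * halfNim p q` is not an option: odd options are irrelevant by parity, and the even ones are
  Nim-sums of two off-diagonal values, which are bounded by the ordinary sum; `halfNim` is
  strictly superadditive over the splits of `(p - 1, q - 1)` (`halfNim_superadd`).
* Every smaller odd number `2 * k + 1` is `1 ^^^ f i (i + q - p)` for some `i < p`, because
  `halfNim` grows by steps of at most one along the diagonal.
* Every smaller even number `2 * k` is obtained, by the same discrete continuity along a row or a
  column, from a split in which one part has nimber `0`. The only value that may be missed is the
  top one; then `k` is odd, and it is obtained from a split in which one part is `(1, 2)` or
  `(2, 1)`, of nimber `2` (`exists_even_split`).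
-/

/-- `mex S` is the least natural number not belonging to `S`. -/
noncomputable def mex (S : Set ℕ) : ℕ := sInf {n : ℕ | n ∉ S}

/-- `h 0 = 0` and `h n = 1` for all `n ≥ 1`. -/
def h : ℕ → ℕ
  | 0 => 0
  | _ + 1 => 1

/-- The nimber of the Circular sprout game `CS₄(𝒫₄ : p,1,q,1)`, defined by strong
recursion: `f p q` is the mex of the set consisting of `h p ^^^ h q` together with all
values `f p' q' ^^^ f (p-1-p') (q-1-q')` for `0 ≤ p' ≤ p-1` and `0 ≤ q' ≤ q-1`. -/
noncomputable def f (p q : ℕ) : ℕ :=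
  mex ({h p ^^^ h q} ∪
    ⋃ (p' : ℕ) (_ : p' < p) (q' : ℕ) (_ : q' < q),
      {f p' q' ^^^ f (p - 1 - p') (q - 1 - q')})
termination_by p
decreasing_by
  · omega
  · omega

/-- Half of the nimber `f p q` of an off-diagonal position; its value for `p = q` is not used
as a nimber. -/
def halfNim (p q : ℕ) : ℕ :=
  if (p = 1 ∧ q = 2) ∨ (p = 2 ∧ q = 1) then 1 else min (min p q) ((2 * (p + q) - 2) / 5)

/-- The closed form of `f`. -/
def nimFormula (p q : ℕ) : ℕ := if p = q then 1 else 2 * halfNim p q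

theorem nimFormula_self (p : ℕ) : nimFormula p p = 1 := by simp [nimFormula]

theorem nimFormula_of_ne {p q : ℕ} (hpq : p ≠ q) : nimFormula p q = 2 * halfNim p q := by
  simp [nimFormula, hpq]

theorem nimFormula_comm (p q : ℕ) : nimFormula p q = nimFormula q p := by
  unfold nimFormula halfNim
  split_ifs <;> omega

/-! ### Nim-sums -/

theorem xor_le_add_nat (a b : ℕ) : a ^^^ b ≤ a + b := by
  induction a using Nat.strong_induction_on generalizing b with
  | _ a ih =>
    rcases Nat.eq_zero_or_pos a with rfl | ha
    · simp
    · have h1 := ih (a / 2) (by omega) (b / 2)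
      have h2 : (a ^^^ b) / 2 = a / 2 ^^^ b / 2 := Nat.xor_div_two
      have h3 : (a ^^^ b) % 2 = (a + b) % 2 := Nat.xor_mod_two_eq
      omega

theorem two_mul_xor_two_mul (a b : ℕ) : (2 * a) ^^^ (2 * b) = 2 * (a ^^^ b) := by
  have h2 : ((2 * a) ^^^ (2 * b)) / 2 = (2 * a) / 2 ^^^ (2 * b) / 2 := Nat.xor_div_two
  have h3 : ((2 * a) ^^^ (2 * b)) % 2 = (2 * a + 2 * b) % 2 := Nat.xor_mod_two_eq
  have ha : 2 * a / 2 = a := by omega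
  have hb : 2 * b / 2 = b := by omega
  rw [ha, hb] at h2
  omega

theorem one_xor_of_even {k : ℕ} (hk : k % 2 = 0) : 1 ^^^ k = k + 1 := by
  rw [Nat.xor_comm, Nat.xor_one_of_even (Nat.even_iff.mpr hk)]

/-! ### The recursion for `f` -/

/-- The set of options whose mex is `f p q`. -/
def options (p q : ℕ) : Set ℕ :=
  {h p ^^^ h q} ∪ ⋃ (p' : ℕ) (_ : p' < p) (q' : ℕ) (_ : q' < q),
      {f p' q' ^^^ f (p - 1 - p') (q - 1 - q')}

theorem f_eq_mex (p q : ℕ) : f p q = mex (options p q) := by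
  rw [f]; rfl

/-- Options are described by the two parts `(a, b)` and `(a', b')` of a split, which avoids
truncated subtraction. -/
theorem mem_options {p q n : ℕ} :
    n ∈ options p q ↔ n = h p ^^^ h q ∨ ∃ a b a' b', a + a' + 1 = p ∧ b + b' + 1 = q ∧
      n = f a b ^^^ f a' b' := by
  simp only [options, Set.mem_union, Set.mem_singleton_iff, Set.mem_iUnion]
  refine or_congr Iff.rfl ⟨?_, ?_⟩
  · rintro ⟨a, ha, b, hb, rfl⟩
    exact ⟨a, b, p - 1 - a, q - 1 - b, by omega, by omega, rfl⟩
  · rintro ⟨a, b, a', b', rfl, rfl, rfl⟩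
    refine ⟨a, by omega, b, by omega, ?_⟩
    rw [show a + a' + 1 - 1 - a = a' by omega, show b + b' + 1 - 1 - b = b' by omega]

theorem mex_eq {S : Set ℕ} {n : ℕ} (hn : n ∉ S) (hlt : ∀ m < n, m ∈ S) : mex S = n := by
  apply le_antisymm
  · exact Nat.sInf_le hn
  · refine le_csInf ⟨n, hn⟩ fun m hm => ?_
    by_contra! hmn
    exact hm (hlt m hmn)

theorem f_comm (p q : ℕ) : f p q = f q p := by
  induction p using Nat.strong_induction_on generalizing q with
  | _ p ih =>
    rw [f_eq_mex, f_eq_mex]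
    congr 1
    ext n
    rw [mem_options, mem_options, Nat.xor_comm (h q)]
    refine or_congr Iff.rfl ⟨?_, ?_⟩
    · rintro ⟨a, b, a', b', h1, h2, rfl⟩
      exact ⟨b, a, b', a', h2, h1, by rw [ih a (by omega), ih a' (by omega)]⟩
    · rintro ⟨a, b, a', b', h1, h2, rfl⟩
      exact ⟨b, a, b', a', h2, h1, by rw [ih b (by omega), ih b' (by omega)]⟩

/-! ### Arithmetic of `halfNim` -/

/-- The defining cases of `halfNim` as linear inequalities. -/
theorem halfNim_spec (p q : ℕ) :
    (((p = 1 ∧ q = 2) ∨ (p = 2 ∧ q = 1)) ∧ halfNim p q = 1) ∨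
    (¬((p = 1 ∧ q = 2) ∨ (p = 2 ∧ q = 1)) ∧ halfNim p q ≤ p ∧ halfNim p q ≤ q ∧
      5 * halfNim p q ≤ 2 * (p + q) - 2 ∧
      (halfNim p q = p ∨ halfNim p q = q ∨ 2 * (p + q) - 2 < 5 * halfNim p q + 5)) := by
  by_cases hc : (p = 1 ∧ q = 2) ∨ (p = 2 ∧ q = 1)
  · exact Or.inl ⟨hc, by simp [halfNim, hc]⟩
  · refine Or.inr ⟨hc, ?_⟩
    simp only [halfNim, if_neg hc]
    omega

/-- Strict superadditivity; parts with equal values are excluded, since `(1, 2)` twice gives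
equality. This is harmless because equal nimbers have Nim-sum `0`. -/
theorem halfNim_superadd {a b a' b' : ℕ} (hab : a ≠ b) (hab' : a' ≠ b')
    (hlt : a + a' < b + b') (hne : halfNim a b ≠ halfNim a' b') :
    halfNim a b + halfNim a' b' < halfNim (a + a' + 1) (b + b' + 1) := by
  have e1 := halfNim_spec a b
  have e2 := halfNim_spec a' b'
  have e3 := halfNim_spec (a + a' + 1) (b + b' + 1)
  generalize halfNim a b = x at *
  generalize halfNim a' b' = y at *
  generalize halfNim (a + a' + 1) (b + b' + 1) = z at *
  rcases e1 with ⟨e1 | e1, rfl⟩ | ⟨-, e1⟩ <;> rcases e2 with ⟨e2 | e2, rfl⟩ | ⟨-, e2⟩ <;>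
    rcases e3 with ⟨e3 | e3, rfl⟩ | ⟨-, -, -, -, e3 | e3 | e3⟩ <;> omega

theorem halfNim_pos {p q : ℕ} (hp : 0 < p) (hpq : p < q) : 0 < halfNim p q := by
  have e1 := halfNim_spec p q
  omega

theorem exists_diag (d : ℕ) (hd : 0 < d) (p : ℕ) : ∀ k ≤ halfNim p (p + d),
    ∃ i ≤ p, halfNim i (i + d) = k := by
  induction p with
  | zero =>
    intro k hk
    refine ⟨0, le_rfl, ?_⟩
    have e1 := halfNim_spec 0 (0 + d)
    omega
  | succ p ih =>
    intro k hk
    by_cases hk' : k ≤ halfNim p (p + d)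
    · obtain ⟨i, hi, hik⟩ := ih k hk'
      exact ⟨i, by omega, hik⟩
    · refine ⟨p + 1, le_rfl, ?_⟩
      have e1 := halfNim_spec p (p + d)
      have e2 := halfNim_spec (p + 1) (p + 1 + d)
      omega

theorem exists_row (r b : ℕ) : b ≠ r → ∀ k ≤ halfNim r b,
    ∃ j ≤ b, j ≠ r ∧ halfNim r j = k := by
  induction b using Nat.strong_induction_on with
  | _ b ih =>
    intro hb k hk
    by_cases hk' : k = halfNim r b
    · exact ⟨b, le_rfl, hb, hk'.symm⟩
    -- The previous off-diagonal entry of the row.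
    obtain ⟨c, hc, hcr, hkc⟩ : ∃ c < b, c ≠ r ∧ k ≤ halfNim r c := by
      have hb0 : 0 < b := by
        rcases Nat.eq_zero_or_pos b with rfl | h0
        · exfalso
          have e1 := halfNim_spec r 0
          omega
        · exact h0
      by_cases hbr : b = r + 1
      · rcases Nat.eq_zero_or_pos r with rfl | hr
        · exfalso
          have e1 := halfNim_spec 0 b
          omega
        · refine ⟨b - 2, by omega, by omega, ?_⟩
          have e1 := halfNim_spec r (b - 2)
          have e2 := halfNim_spec r b
          omega
      · refine ⟨b - 1, by omega, by omega, ?_⟩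
        have e1 := halfNim_spec r (b - 1)
        have e2 := halfNim_spec r b
        omega
    obtain ⟨j, hj, hjr, hjk⟩ := ih c hc hcr k hkc
    exact ⟨j, by omega, hjr, hjk⟩

theorem exists_col (s p : ℕ) (hp : p < s) : ∀ k ≤ halfNim p s,
    ∃ i ≤ p, halfNim i s = k := by
  induction p with
  | zero =>
    intro k hk
    refine ⟨0, le_rfl, ?_⟩
    have e1 := halfNim_spec 0 s
    omega
  | succ p ih =>
    intro k hk
    by_cases hk' : k ≤ halfNim p s
    · obtain ⟨i, hi, hik⟩ := ih (by omega) k hk'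
      exact ⟨i, by omega, hik⟩
    · refine ⟨p + 1, le_rfl, ?_⟩
      have e1 := halfNim_spec p s
      have e2 := halfNim_spec (p + 1) s
      omega

theorem halfNim_zero_left (b : ℕ) : halfNim 0 b = 0 := by simp [halfNim]

theorem halfNim_zero_right (a : ℕ) : halfNim a 0 = 0 := by simp [halfNim]

/-- Every `k` with `0 < k < halfNim p q` is a Nim-sum of values of `halfNim` over a split into off-diagonal parts. -/
theorem exists_even_split {p q k : ℕ} (hp : 0 < p) (hpq : p < q) (hk0 : 0 < k)
    (hk : k < halfNim p q) :
    ∃ a b a' b', a + a' + 1 = p ∧ b + b' + 1 = q ∧ a ≠ b ∧ a' ≠ b' ∧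
      k = halfNim a b ^^^ halfNim a' b' := by
  by_cases hd : q = p + 1
  · subst hd
    have hp2 : 2 ≤ p := by
      have e1 := halfNim_spec p (p + 1)
      omega
    by_cases hkc : k ≤ halfNim (p - 2) p
    · obtain ⟨i, hi, hik⟩ := exists_col p (p - 2) (by omega) k hkc
      exact ⟨i, p, p - 1 - i, 0, by omega, by omega, by omega, by omega,
        by rw [halfNim_zero_right, hik]; simp⟩
    · have hp3 : 3 ≤ p := by
        have e1 := halfNim_spec p (p + 1)
        have e2 := halfNim_spec (p - 2) p
        omega
      refine ⟨2, 1, p - 3, p - 1, by omega, by omega, by omega, by omega, ?_⟩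
      have h1 : halfNim 2 1 = 1 := by simp [halfNim]
      have h2 : k = halfNim (p - 3) (p - 1) + 1 ∧ halfNim (p - 3) (p - 1) % 2 = 0 := by
        have e1 := halfNim_spec p (p + 1)
        have e2 := halfNim_spec (p - 2) p
        -- `k` exceeds the value in `e2` and is below `halfNim p q`, which forces this equality;
        -- the equality makes `k` odd.
        have e4 : 5 * k + 5 = 4 * p := by omega
        have e3 := halfNim_spec (p - 3) (p - 1)
        have e5 : k = halfNim (p - 3) (p - 1) + 1 := by omega
        exact ⟨e5, by omega⟩
      rw [h1, one_xor_of_even h2.2]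
      exact h2.1
  · by_cases hkr : k ≤ halfNim (p - 1) (q - 2)
    · obtain ⟨j, hj, hjr, hjk⟩ := exists_row (p - 1) (q - 2) (by omega) k hkr
      exact ⟨p - 1, j, 0, q - 1 - j, by omega, by omega, by omega, by omega,
        by rw [halfNim_zero_left, hjk]; simp⟩
    · have hp3 : 2 ≤ p := by
        have e1 := halfNim_spec p q
        omega
      refine ⟨1, 2, p - 2, q - 3, by omega, by omega, by omega, by omega, ?_⟩
      have h1 : halfNim 1 2 = 1 := by simp [halfNim]
      have h2 : k = halfNim (p - 2) (q - 3) + 1 ∧ halfNim (p - 2) (q - 3) % 2 = 0 := by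
        have e1 := halfNim_spec p q
        have e2 := halfNim_spec (p - 1) (q - 2)
        -- `k` exceeds the value in `e2` and is below `halfNim p q`, which forces this equality;
        -- the equality makes `k` odd.
        have e4 : 5 * k + 7 = 2 * (p + q) := by omega
        have e3 := halfNim_spec (p - 2) (q - 3)
        have e5 : k = halfNim (p - 2) (q - 3) + 1 := by omega
        exact ⟨e5, by omega⟩
      rw [h1, one_xor_of_even h2.2]
      exact h2.1

/-! ### The closed form -/

theorem h_of_pos {n : ℕ} (hn : 0 < n) : h n = 1 := by
  obtain ⟨m, rfl⟩ := Nat.exists_eq_succ_of_ne_zero hn.ne'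
  rfl

theorem mex_diag {p : ℕ} (ih : ∀ a < p, ∀ b, f a b = nimFormula a b) :
    mex (options p p) = 1 := by
  apply mex_eq
  · rw [mem_options, Nat.xor_self]
    rintro (h0 | ⟨a, b, a', b', h1, h2, h3⟩)
    · omega
    · rw [ih a (by omega), ih a' (by omega)] at h3
      by_cases hab : a = b
      · obtain rfl : a' = b' := by omega
        subst hab
        simp [nimFormula_self] at h3
      · rw [nimFormula_of_ne hab, nimFormula_of_ne (by omega), two_mul_xor_two_mul] at h3
        omega
  · intro m hm
    rw [mem_options, Nat.xor_self]
    left; omega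

theorem mex_of_lt {p q : ℕ} (hpq : p < q) (ih : ∀ a < p, ∀ b, f a b = nimFormula a b) :
    mex (options p q) = 2 * halfNim p q := by
  rcases Nat.eq_zero_or_pos p with rfl | hp
  · rw [halfNim_zero_left]
    refine mex_eq ?_ (by omega)
    rw [mem_options, h_of_pos hpq]
    rintro (h0 | ⟨a, b, a', b', h1, h2, h3⟩)
    · simp [h] at h0
    · omega
  have hh : h p ^^^ h q = 0 := by rw [h_of_pos hp, h_of_pos (by omega)]; rfl
  apply mex_eq
  · have hpos := halfNim_pos hp hpq
    rw [mem_options, hh]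
    rintro (h0 | ⟨a, b, a', b', h1, h2, h3⟩)
    · omega
    rw [ih a (by omega), ih a' (by omega)] at h3
    have hpar : (nimFormula a b ^^^ nimFormula a' b') % 2
        = (nimFormula a b + nimFormula a' b') % 2 := Nat.xor_mod_two_eq
    by_cases hab : a = b
    · rw [← h3, hab, nimFormula_self, nimFormula_of_ne (by omega)] at hpar
      omega
    by_cases hab' : a' = b'
    · rw [← h3, hab', nimFormula_self, nimFormula_of_ne hab] at hpar
      omega
    rw [nimFormula_of_ne hab, nimFormula_of_ne hab', two_mul_xor_two_mul] at h3
    by_cases hne : halfNim a b = halfNim a' b'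
    · rw [hne, Nat.xor_self] at h3
      omega
    · have hs := halfNim_superadd hab hab' (by omega) hne
      rw [h1, h2] at hs
      have := xor_le_add_nat (halfNim a b) (halfNim a' b')
      omega
  · intro m hm
    rw [mem_options, hh]
    rcases Nat.eq_zero_or_pos m with rfl | hm0
    · exact Or.inl rfl
    right
    rcases Nat.mod_two_eq_zero_or_one m with hm2 | hm2
    · obtain ⟨a, b, a', b', h1, h2, hab, hab', hk⟩ :=
        exists_even_split (k := m / 2) hp hpq (by omega) (by omega)
      refine ⟨a, b, a', b', h1, h2, ?_⟩
      rw [ih a (by omega), ih a' (by omega), nimFormula_of_ne hab, nimFormula_of_ne hab',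
        two_mul_xor_two_mul, ← hk]
      omega
    · have hle : m / 2 ≤ halfNim (p - 1) (p - 1 + (q - p)) := by
        have e1 := halfNim_spec p q
        have e2 := halfNim_spec (p - 1) (p - 1 + (q - p))
        omega
      obtain ⟨i, hi, hik⟩ := exists_diag (q - p) (by omega) (p - 1) (m / 2) hle
      refine ⟨p - 1 - i, p - 1 - i, i, i + (q - p), by omega, by omega, ?_⟩
      rw [ih _ (by omega), ih i (by omega), nimFormula_self, nimFormula_of_ne (by omega), hik,
        one_xor_of_even (by omega)]
      omega

theorem f_eq_nimFormula (p q : ℕ) : f p q = nimFormula p q := by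
  induction p using Nat.strong_induction_on generalizing q with
  | _ p ih =>
    rcases lt_trichotomy p q with hlt | rfl | hgt
    · rw [f_eq_mex, mex_of_lt hlt ih, nimFormula_of_ne hlt.ne]
    · rw [f_eq_mex, mex_diag ih, nimFormula_self]
    · rw [f_comm, ih q hgt, nimFormula_comm]

theorem stmt4 (p : ℕ) : f p p = 1 := by
  rw [f_eq_nimFormula, nimFormula_self]
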